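/- Let p > 1 with 1/p + 1/q = 1, and let f, g be two positive continuous functions on [0, ∞) such that for x > 0 the integrals I^{α,β,η,μ}_{x,k}[f] and I^{α,β,η,μ}_{x,k}[g] are finite. If 0 < m ≤ f(τ)/g(τ) ≤ M < ∞ for all τ ∈ (0, x), then (I^{α,β,η,μ}_{x,k}[f])^{1/p} · (I^{α,β,η,μ}_{x,k}[g])^{1/q} ≤ (M/m)^{1/(pq)} · I^{α,β,η,μ}_{x,k}[f^{1/p} g^{1/q}]. -/

import Mathlib

/-! The kernel `Fker` is nonnegative on `(0, x)`, since every term of the Gauss series has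
positive parameters `α + β + μ`, `-η`, `α` and a nonnegative argument. Writing
`h = f ^ (1/p) * g ^ (1/q)`, the bounds on `f / g` give pointwise `f ≤ M ^ (1/q) * h` and
`g ≤ (1/m) ^ (1/p) * h`. Integrating these against the kernel, raising them to the powers `1/p` and
`1/q` and multiplying yields the claim, because `1/p + 1/q = 1`. -/


open MeasureTheory Real Set

/-- The Gauss hypergeometric series `₂F₁(a, b; c; z)`. -/
noncomputable def gauss2F1 (a b c z : ℝ) : ℝ :=
  ∑' n : ℕ, ((ascPochhammer ℝ n).eval a * (ascPochhammer ℝ n).eval b /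
    ((ascPochhammer ℝ n).eval c * (n.factorial : ℝ))) * z ^ n

/-- The kernel `F(x, τ)` of the generalized k-fractional integral operator. -/
noncomputable def Fker (α β η μ k x τ : ℝ) : ℝ :=
  ((k + 1) ^ (μ + β + 1) * x ^ ((k + 1) * (-α - β - 2 * μ)) / Real.Gamma α) *
    τ ^ ((k + 1) * μ) * (x ^ (k + 1) - τ ^ (k + 1)) ^ (α - 1) *
    gauss2F1 (α + β + μ) (-η) α (1 - (τ / x) ^ (k + 1))

/-- The generalized k-fractional integral operator `I^{α,β,η,μ}_{x,k}[f]`. -/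
noncomputable def genKInt (α β η μ k x : ℝ) (f : ℝ → ℝ) : ℝ :=
  ∫ τ in (0:ℝ)..x, Fker α β η μ k x τ * τ ^ k * f τ

lemma gauss2F1_nonneg {a b c z : ℝ} (ha : 0 < a) (hb : 0 < b) (hc : 0 < c) (hz : 0 ≤ z) :
    0 ≤ gauss2F1 a b c z := by
  refine tsum_nonneg fun n => ?_
  have h1 := ascPochhammer_pos n a ha
  have h2 := ascPochhammer_pos n b hb
  have h3 := ascPochhammer_pos n c hc
  positivity

lemma Fker_nonneg {α β η μ k x τ : ℝ} (hk : 0 ≤ k) (hα : max 0 (-β - μ) < α) (hη2 : η < 0)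
    (h0 : 0 < τ) (hτ : τ < x) : 0 ≤ Fker α β η μ k x τ := by
  obtain ⟨hα0, hα1⟩ := max_lt_iff.1 hα
  have hx : 0 < x := h0.trans hτ
  have hΓ := Real.Gamma_pos_of_pos hα0
  have hsub : 0 ≤ x ^ (k + 1) - τ ^ (k + 1) :=
    sub_nonneg.2 (Real.rpow_le_rpow h0.le hτ.le (by linarith))
  have hz : 0 ≤ 1 - (τ / x) ^ (k + 1) :=
    sub_nonneg.2 (Real.rpow_le_one (by positivity) ((div_le_one hx).2 hτ.le) (by linarith))
  have hG := gauss2F1_nonneg (a := α + β + μ) (b := -η) (by linarith) (by linarith) hα0 hz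
  have hs := Real.rpow_nonneg hsub (α - 1)
  unfold Fker
  positivity

/-- If `a ≤ M * b` and `r + s = 1`, then `a = a ^ r * a ^ s ≤ M ^ s * (a ^ r * b ^ s)`. -/
lemma le_rpow_mul_geom {a b M r s : ℝ} (ha : 0 < a) (hb : 0 < b) (hM : 0 < M) (hs : 0 ≤ s)
    (hrs : r + s = 1) (h : a ≤ M * b) : a ≤ M ^ s * (a ^ r * b ^ s) := by
  calc a = a ^ r * a ^ s := by rw [← Real.rpow_add ha, hrs, Real.rpow_one]
    _ ≤ a ^ r * (M * b) ^ s := by gcongr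
    _ = M ^ s * (a ^ r * b ^ s) := by rw [Real.mul_rpow hM.le hb.le]; ring

/-- Monotonicity of the fractional integral, with a constant factor pulled out. -/
lemma genKInt_le_mul {α β η μ k x C : ℝ} {u v : ℝ → ℝ} (hk : 0 ≤ k)
    (hα : max 0 (-β - μ) < α) (hη2 : η < 0) (hx : 0 < x)
    (hu : IntervalIntegrable (fun τ => Fker α β η μ k x τ * τ ^ k * u τ) volume 0 x)
    (hv : IntervalIntegrable (fun τ => Fker α β η μ k x τ * τ ^ k * v τ) volume 0 x)
    (huv : ∀ τ ∈ Ioo (0:ℝ) x, u τ ≤ C * v τ) :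
    genKInt α β η μ k x u ≤ C * genKInt α β η μ k x v := by
  unfold genKInt
  rw [← intervalIntegral.integral_const_mul]
  refine intervalIntegral.integral_mono_on_of_le_Ioo hx.le hu (hv.const_mul C) fun τ hτ => ?_
  have hK : 0 ≤ Fker α β η μ k x τ * τ ^ k :=
    mul_nonneg (Fker_nonneg hk hα hη2 hτ.1 hτ.2) (Real.rpow_nonneg hτ.1.le k)
  calc _ ≤ Fker α β η μ k x τ * τ ^ k * (C * v τ) := mul_le_mul_of_nonneg_left (huv τ hτ) hK
    _ = _ := by ring

lemma genKInt_nonneg {α β η μ k x : ℝ} {u : ℝ → ℝ} (hk : 0 ≤ k)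
    (hα : max 0 (-β - μ) < α) (hη2 : η < 0) (hx : 0 < x) (hu : ∀ τ ∈ Ioo (0:ℝ) x, 0 ≤ u τ) :
    0 ≤ genKInt α β η μ k x u := by
  unfold genKInt
  rw [intervalIntegral.integral_of_le hx.le, integral_Ioc_eq_integral_Ioo]
  refine setIntegral_nonneg measurableSet_Ioo fun τ hτ => ?_
  exact mul_nonneg (mul_nonneg (Fker_nonneg hk hα hη2 hτ.1 hτ.2) (Real.rpow_nonneg hτ.1.le k))
    (hu τ hτ)

theorem holder_type (α β η μ k x : ℝ)
    (hk : 0 ≤ k) (hα : max 0 (-β - μ) < α) (hβ : β < 1) (hμ : -1 < μ)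
    (hη1 : β - 1 < η) (hη2 : η < 0) (hx : 0 < x) (p q m M : ℝ) (f g : ℝ → ℝ)
    (hfc : ContinuousOn f (Ici 0)) (hgc : ContinuousOn g (Ici 0))
    (hfpos : ∀ t ∈ Ici (0:ℝ), 0 < f t) (hgpos : ∀ t ∈ Ici (0:ℝ), 0 < g t)
    (hp : 1 < p) (hpq : 1 / p + 1 / q = 1) (hm : 0 < m)
    (hfin_f : IntervalIntegrable (fun τ => Fker α β η μ k x τ * τ ^ k * (f τ)) volume 0 x)
    (hfin_g : IntervalIntegrable (fun τ => Fker α β η μ k x τ * τ ^ k * (g τ)) volume 0 x)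
    (hbd : ∀ τ ∈ Ioo (0:ℝ) x, m ≤ f τ / g τ ∧ f τ / g τ ≤ M) :
    (genKInt α β η μ k x (fun τ => f τ)) ^ (1 / p) * (genKInt α β η μ k x (fun τ => g τ)) ^ (1 / q) ≤
      (M / m) ^ (1 / (p * q)) * (genKInt α β η μ k x (fun τ => f τ ^ (1 / p) * g τ ^ (1 / q))) := by
  have hp0 : 0 < 1 / p := by positivity
  have hq0 : 0 < 1 / q := by
    have : 1 / p < 1 := (div_lt_one (by linarith)).2 hp
    linarith
  have hM : 0 < M := by
    have := hbd (x / 2) ⟨by linarith, by linarith⟩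
    linarith
  have hexp : 1 / (p * q) = 1 / p * (1 / q) := by rw [one_div_mul_one_div]
  rw [hexp]
  generalize 1 / p = r at *
  generalize 1 / q = s at *
  set h : ℝ → ℝ := fun τ => f τ ^ r * g τ ^ s with hh
  -- `h / f` is continuous on `[0, x]`, so integrability transfers from `f` to `h`.
  have hfin_h : IntervalIntegrable (fun τ => Fker α β η μ k x τ * τ ^ k * h τ) volume 0 x := by
    have hsub : uIcc 0 x ⊆ Ici (0:ℝ) := by
      rw [uIcc_of_le hx.le]; exact Icc_subset_Ici_self
    have hc : ContinuousOn (fun τ => h τ / f τ) (uIcc 0 x) := by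
      refine ContinuousOn.mono ?_ hsub
      refine ContinuousOn.div ?_ hfc fun t ht => (hfpos t ht).ne'
      exact (hfc.rpow_const fun t ht => Or.inl (hfpos t ht).ne').mul
        (hgc.rpow_const fun t ht => Or.inl (hgpos t ht).ne')
    refine (hfin_f.mul_continuousOn hc).congr fun τ hτ => ?_
    have := hfpos τ (hsub (uIoc_subset_uIcc hτ))
    field_simp
  have h1 : genKInt α β η μ k x f ≤ M ^ s * genKInt α β η μ k x h := by
    refine genKInt_le_mul hk hα hη2 hx hfin_f hfin_h fun τ hτ => ?_
    have hf := hfpos τ hτ.1.le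
    have hg := hgpos τ hτ.1.le
    exact le_rpow_mul_geom hf hg hM hq0.le hpq ((div_le_iff₀ hg).1 (hbd τ hτ).2)
  have h2 : genKInt α β η μ k x g ≤ (1 / m) ^ r * genKInt α β η μ k x h := by
    refine genKInt_le_mul hk hα hη2 hx hfin_g hfin_h fun τ hτ => ?_
    have hf := hfpos τ hτ.1.le
    have hg := hgpos τ hτ.1.le
    have hle : g τ ≤ 1 / m * f τ := by
      have := (le_div_iff₀ hg).1 (hbd τ hτ).1
      rw [one_div, ← div_eq_inv_mul, le_div_iff₀ hm]
      linarith
    have := le_rpow_mul_geom hg hf (one_div_pos.2 hm) hp0.le (by linarith : s + r = 1) hle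
    rwa [mul_comm (g τ ^ s)] at this
  have nn : ∀ u : ℝ → ℝ, (∀ τ ∈ Ioo (0:ℝ) x, 0 ≤ u τ) → 0 ≤ genKInt α β η μ k x u :=
    fun u hu => genKInt_nonneg hk hα hη2 hx hu
  have hF := nn f fun τ hτ => (hfpos τ hτ.1.le).le
  have hG := nn g fun τ hτ => (hgpos τ hτ.1.le).le
  have hH := nn h fun τ hτ => mul_nonneg (Real.rpow_nonneg (hfpos τ hτ.1.le).le _)
    (Real.rpow_nonneg (hgpos τ hτ.1.le).le _)
  change genKInt α β η μ k x f ^ r * genKInt α β η μ k x g ^ s ≤ _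
  generalize genKInt α β η μ k x f = F at *
  generalize genKInt α β η μ k x g = G at *
  generalize genKInt α β η μ k x h = H at *
  have hm' : 0 < 1 / m := one_div_pos.2 hm
  calc F ^ r * G ^ s ≤ (M ^ s * H) ^ r * ((1 / m) ^ r * H) ^ s := by gcongr
    _ = (M ^ s) ^ r * ((1 / m) ^ r) ^ s * (H ^ r * H ^ s) := by
        rw [Real.mul_rpow (by positivity) hH, Real.mul_rpow (by positivity) hH]; ring
    _ = (M / m) ^ (r * s) * H := by
        rw [← Real.rpow_mul hM.le, ← Real.rpow_mul hm'.le, mul_comm s r,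
          ← Real.mul_rpow hM.le hm'.le, mul_one_div,
          ← Real.rpow_add_of_nonneg hH hp0.le hq0.le, hpq, Real.rpow_one]
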